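/- Let s > 0 and t > 0 be real numbers with s ≠ t, let i ≥ 0 be an integer, and let p ≤ −i−1 be a real number. Then (−1)^i ψ^{(i)}(L_p(s,t)) ≤ ((−1)^i/(t−s)) · ∫_s^t ψ^{(i)}(u) du, where ψ^{(0)} = ψ. -/

import Mathlib

/-!
Write `f = (-1)^i ψ⁽ⁱ⁾` and let `c = L_p(s,t)`, so that `c^p` is the mean of `u^p` over `[s,t]`.
The claim is Jensen's inequality for `f` regarded as a convex function of `v = u^p`. Convexity in
`v` amounts to `u^(1-p) f'(u)` being increasing, and this is visible from the series
`f'(u) = (i+1)! ∑ₖ (u+k)^(-(i+2))`: the function `u^(1-p) (u+k)^(-(i+2))` is the product of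
`(u/(u+k))^(i+2)` and `u^(-i-1-p)`, both increasing when `p ≤ -i-1`.

Jensen's inequality is used through the supporting line at `c` (`tangent_ineq`), integrated over
`[s,t]`. The series for `ψ'` comes from the functional equation `ψ(x+1) = ψ(x) + 1/x` and the
monotonicity of `ψ` (log-convexity of `Γ`), which give
`ψ(x) = ψ(1) + ∑ₖ (1/(k+1) - 1/(x+k))`; termwise differentiation gives the higher derivatives.
-/

open Real

/-- The digamma function `ψ = Γ′/Γ`. -/
noncomputable def digamma (x : ℝ) : ℝ := deriv Real.Gamma x / Real.Gamma x

/-- The `i`-th derivative of the digamma function, `ψ⁽ⁱ⁾`, with `ψ⁽⁰⁾ = ψ`. -/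
noncomputable def polygamma (i : ℕ) : ℝ → ℝ := deriv^[i] digamma

/-- The generalized logarithmic mean `L_p(a,b)`. -/
noncomputable def genLogMean (p a b : ℝ) : ℝ :=
  if p = -1 then (b - a) / (Real.log b - Real.log a)
  else if p = 0 then (1 / Real.exp 1) * (b ^ b / a ^ a) ^ (1 / (b - a))
  else ((b ^ (p + 1) - a ^ (p + 1)) / ((p + 1) * (b - a))) ^ (1 / p)

open Filter Topology Set

/-! ### The series for the digamma function -/

lemma differentiableAt_Gamma_of_pos {x : ℝ} (hx : 0 < x) : DifferentiableAt ℝ Real.Gamma x := by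
  refine Real.differentiableAt_Gamma fun m => ?_
  have : (0 : ℝ) ≤ m := m.cast_nonneg
  linarith

lemma hasDerivAt_log_Gamma {x : ℝ} (hx : 0 < x) :
    HasDerivAt (Real.log ∘ Real.Gamma) (digamma x) x :=
  (differentiableAt_Gamma_of_pos hx).hasDerivAt.log (Real.Gamma_pos_of_pos hx).ne'

lemma digamma_monotoneOn : MonotoneOn digamma (Ioi 0) := by
  have h := Real.convexOn_log_Gamma.monotoneOn_deriv
    (fun x hx => (hasDerivAt_log_Gamma hx).differentiableAt)
  intro x hx y hy hxy
  simpa only [(hasDerivAt_log_Gamma hx).deriv, (hasDerivAt_log_Gamma hy).deriv] using h hx hy hxy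

lemma digamma_add_one {x : ℝ} (hx : 0 < x) : digamma (x + 1) = digamma x + 1 / x := by
  have h1 : HasDerivAt (fun y => (Real.log ∘ Real.Gamma) (y + 1)) (digamma (x + 1)) x :=
    (hasDerivAt_log_Gamma (by linarith : 0 < x + 1)).comp_add_const x 1
  have h2 : HasDerivAt (fun y => Real.log y + (Real.log ∘ Real.Gamma) y) (1 / x + digamma x) x := by
    rw [one_div]
    exact (Real.hasDerivAt_log hx.ne').add (hasDerivAt_log_Gamma hx)
  have h3 : (fun y => (Real.log ∘ Real.Gamma) (y + 1))
      =ᶠ[𝓝 x] fun y => Real.log y + (Real.log ∘ Real.Gamma) y := by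
    filter_upwards [lt_mem_nhds hx] with y hy
    simp only [Function.comp_apply]
    rw [Real.Gamma_add_one hy.ne', Real.log_mul hy.ne' (Real.Gamma_pos_of_pos hy).ne']
  rw [add_comm (digamma x)]
  exact (h1.congr_of_eventuallyEq h3.symm).unique h2

lemma digamma_add_nat {x : ℝ} (hx : 0 < x) (n : ℕ) :
    digamma (x + n) = digamma x + ∑ k ∈ Finset.range n, 1 / (x + k) := by
  induction n with
  | zero => simp
  | succ n ih =>
    rw [Finset.sum_range_succ, ← add_assoc, ← ih, Nat.cast_succ, ← add_assoc,
      digamma_add_one (by positivity)]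

/-- By monotonicity both values lie between `ψ(n)` and `ψ(n+m)` for a fixed `m ≥ max x 1`, and
`ψ(n+m) - ψ(n) ≤ m/n`. -/
lemma tendsto_digamma_sub {x : ℝ} (hx : 0 < x) :
    Tendsto (fun n : ℕ => digamma (x + n) - digamma (1 + n)) atTop (𝓝 0) := by
  obtain ⟨m, hm⟩ := exists_nat_ge (x + 1)
  have hlim : Tendsto (fun n : ℕ => (m : ℝ) / n) atTop (𝓝 0) :=
    tendsto_const_div_atTop_nhds_zero_nat _
  refine squeeze_zero_norm' ?_ hlim
  filter_upwards [eventually_gt_atTop 0] with n hn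
  have hn' : (0 : ℝ) < n := by exact_mod_cast hn
  have hm0 : (0 : ℝ) ≤ m := m.cast_nonneg
  have hgap : digamma (n + m) - digamma n ≤ m / n := by
    rw [digamma_add_nat hn', add_sub_cancel_left]
    calc ∑ k ∈ Finset.range m, 1 / ((n : ℝ) + k)
        ≤ ∑ _k ∈ Finset.range m, 1 / (n : ℝ) := by
          refine Finset.sum_le_sum fun k _ => ?_
          gcongr
          simp
      _ = m / n := by simp [div_eq_mul_inv]
  have mono : ∀ a b : ℝ, 0 < a → a ≤ b → digamma a ≤ digamma b := fun a b ha hab =>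
    digamma_monotoneOn ha (lt_of_lt_of_le ha hab) hab
  have h1 := mono n (x + n) hn' (by linarith)
  have h2 := mono n (1 + n) hn' (by linarith)
  have h3 := mono (x + n) (n + m) (by linarith) (by linarith)
  have h4 := mono (1 + n) (n + m) (by linarith) (by linarith)
  rw [Real.norm_eq_abs, abs_le]
  constructor <;> linarith

/-! ### Derivatives of the digamma function -/

/-- The series `∑ₖ (x+k)^(-q)`, that is, the Hurwitz zeta function at a natural number `q`. It is
used for `q ≥ 2` and `x > 0`, where it converges. -/
noncomputable def hurwitzSum (q : ℕ) (x : ℝ) : ℝ := ∑' k : ℕ, ((x + k) ^ q)⁻¹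

lemma summable_hurwitz {q : ℕ} (hq : 2 ≤ q) {x : ℝ} (hx : 0 < x) :
    Summable fun k : ℕ => ((x + k) ^ q)⁻¹ := by
  have h := (Real.summable_one_div_nat_add_rpow x q).2 (by exact_mod_cast hq)
  refine h.congr fun k => ?_
  have : 0 < (k : ℝ) + x := by positivity
  rw [abs_of_pos this, Real.rpow_natCast, one_div, add_comm]

lemma hasDerivAt_inv_pow_shift {x : ℝ} (hx : 0 < x) (q k : ℕ) :
    HasDerivAt (fun y : ℝ => ((y + k) ^ q)⁻¹) (-(q * ((x + k) ^ (q + 1))⁻¹)) x := by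
  have hk : x + k ≠ 0 := by positivity
  have h := (((hasDerivAt_id x).add_const (k : ℝ)).pow q).inv (pow_ne_zero q hk)
  refine h.congr_deriv ?_
  rcases q with _ | q
  · simp
  · simp only [id, Nat.add_sub_cancel, mul_one, Pi.pow_apply]
    field_simp
    ring

lemma inv_pow_shift_le {a y : ℝ} (ha : 0 < a) (hy : a ≤ y) (q k : ℕ) :
    ((y + k) ^ q)⁻¹ ≤ ((a + k) ^ q)⁻¹ := by
  gcongr

lemma hasDerivAt_hurwitzSum {q : ℕ} (hq : 2 ≤ q) {x : ℝ} (hx : 0 < x) :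
    HasDerivAt (hurwitzSum q) (-(q * hurwitzSum (q + 1) x)) x := by
  have hx2 : 0 < x / 2 := by linarith
  have h := hasDerivAt_tsum_of_isPreconnected (𝕜 := ℝ) (t := Ioi (x / 2))
    (u := fun k : ℕ => (q : ℝ) * ((x / 2 + k) ^ (q + 1))⁻¹)
    (g := fun (k : ℕ) y => ((y + k) ^ q)⁻¹)
    (g' := fun (k : ℕ) y => -(q * ((y + k) ^ (q + 1))⁻¹)) (y₀ := x) (y := x)
    ((summable_hurwitz (by omega) hx2).mul_left _) isOpen_Ioi isPreconnected_Ioi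
    (fun k y hy => hasDerivAt_inv_pow_shift (hx2.trans hy) q k)
    (fun k y hy => by
      have hy0 : 0 < y := hx2.trans hy
      rw [norm_neg, Real.norm_of_nonneg (by positivity)]
      exact mul_le_mul_of_nonneg_left (inv_pow_shift_le hx2 (le_of_lt hy) _ _) (by positivity))
    (half_lt_self hx) (summable_hurwitz hq hx) (half_lt_self hx)
  rwa [tsum_neg, tsum_mul_left] at h

lemma hasDerivAt_digamma {x : ℝ} (hx : 0 < x) : HasDerivAt digamma (hurwitzSum 2 x) x := by
  -- `a` lies below both `x` and the base point `1`, where all terms of the series vanish.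
  obtain ⟨a, ha, hax, ha1⟩ : ∃ a : ℝ, 0 < a ∧ a < x ∧ a < 1 :=
    ⟨min x 1 / 2, by positivity, by
      have := min_le_left x 1; linarith, by have := min_le_right x 1; linarith⟩
  have hder : ∀ (k : ℕ) (y : ℝ), y ∈ Ioi a →
      HasDerivAt (fun z : ℝ => ((1 : ℝ) + k)⁻¹ - (z + k)⁻¹) (((y + k) ^ 2)⁻¹) y := by
    intro k y hy
    simpa using (hasDerivAt_inv_pow_shift (ha.trans hy) 1 k).const_sub (((1 : ℝ) + k)⁻¹)
  have hbd : ∀ (k : ℕ) (y : ℝ), y ∈ Ioi a → ‖((y + k) ^ 2)⁻¹‖ ≤ ((a + k) ^ 2)⁻¹ := by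
    intro k y hy
    have hy0 : 0 < y := ha.trans hy
    rw [Real.norm_of_nonneg (by positivity)]
    exact inv_pow_shift_le ha (le_of_lt hy) _ _
  have h0 : Summable fun k : ℕ => ((1 : ℝ) + k)⁻¹ - ((1 : ℝ) + k)⁻¹ := by simp
  have hsummable : ∀ y ∈ Ioi a, Summable fun k : ℕ => ((1 : ℝ) + k)⁻¹ - (y + k)⁻¹ := fun y hy =>
    summable_of_summable_hasDerivAt_of_isPreconnected (summable_hurwitz le_rfl ha) isOpen_Ioi
      isPreconnected_Ioi hder hbd (mem_Ioi.2 ha1) h0 hy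
  have h := hasDerivAt_tsum_of_isPreconnected (summable_hurwitz le_rfl ha) isOpen_Ioi
      isPreconnected_Ioi hder hbd (mem_Ioi.2 ha1) h0 (mem_Ioi.2 hax)
  have hser : ∀ y ∈ Ioi a,
      digamma y = digamma 1 + ∑' k : ℕ, (((1 : ℝ) + k)⁻¹ - (y + k)⁻¹) := by
    intro y hy
    have hy0 : 0 < y := ha.trans hy
    have h1 := (hsummable y hy).hasSum.tendsto_sum_nat
    have h2 : Tendsto (fun n : ℕ => ∑ k ∈ Finset.range n, (((1 : ℝ) + k)⁻¹ - (y + k)⁻¹)) atTop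
        (𝓝 (digamma y - digamma 1)) := by
      have h3 := (tendsto_digamma_sub hy0).const_sub (digamma y - digamma 1)
      rw [sub_zero] at h3
      refine h3.congr fun n => ?_
      rw [digamma_add_nat hy0, digamma_add_nat one_pos, Finset.sum_sub_distrib]
      simp only [one_div]
      ring
    have := tendsto_nhds_unique h1 h2
    linarith
  refine (h.const_add (digamma 1)).congr_of_eventuallyEq ?_
  filter_upwards [lt_mem_nhds hax] with y hy using hser y hy

lemma hasDerivAt_polygamma (i : ℕ) {x : ℝ} (hx : 0 < x) :
    HasDerivAt (polygamma i) ((-1) ^ i * ((i + 1).factorial * hurwitzSum (i + 2) x)) x := by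
  induction i generalizing x with
  | zero => simpa [polygamma] using hasDerivAt_digamma hx
  | succ i ih =>
    have hEq : polygamma (i + 1)
        =ᶠ[𝓝 x] fun y => (-1) ^ i * ((i + 1).factorial * hurwitzSum (i + 2) y) := by
      filter_upwards [lt_mem_nhds hx] with y hy
      rw [← (ih hy).deriv]
      simp only [polygamma, Function.iterate_succ_apply']
    have h := ((hasDerivAt_hurwitzSum (q := i + 2) (by omega) hx).const_mul
      (((i + 1).factorial : ℝ))).const_mul ((-1 : ℝ) ^ i)
    refine (h.congr_of_eventuallyEq hEq).congr_deriv ?_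
    rw [Nat.factorial_succ (i + 1), pow_succ]
    push_cast
    ring

/-! ### Convexity in the variable `u^p` -/

lemma rpow_mul_hurwitzSum_mono {i : ℕ} {p : ℝ} (hp : p ≤ -(i : ℝ) - 1) {x y : ℝ} (hx : 0 < x)
    (hxy : x ≤ y) :
    x ^ (1 - p) * hurwitzSum (i + 2) x ≤ y ^ (1 - p) * hurwitzSum (i + 2) y := by
  have hy : 0 < y := hx.trans_le hxy
  have hterm : ∀ (z : ℝ), 0 < z → ∀ k : ℕ,
      z ^ (1 - p) * ((z + k) ^ (i + 2))⁻¹ = z ^ (-(i : ℝ) - 1 - p) * (z / (z + k)) ^ (i + 2) := by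
    intro z hz k
    have : (1 - p : ℝ) = (-(i : ℝ) - 1 - p) + ((i + 2 : ℕ) : ℝ) := by push_cast; ring
    rw [this, Real.rpow_add hz, Real.rpow_natCast, div_pow]
    ring
  unfold hurwitzSum
  rw [← tsum_mul_left, ← tsum_mul_left]
  refine Summable.tsum_le_tsum (fun k => ?_) ((summable_hurwitz (by omega) hx).mul_left _)
    ((summable_hurwitz (by omega) hy).mul_left _)
  rw [hterm x hx, hterm y hy]
  have hfrac : x / (x + k) ≤ y / (y + k) := by
    have hk : (0 : ℝ) ≤ k := k.cast_nonneg
    rw [div_le_div_iff₀ (by positivity) (by positivity)]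
    nlinarith
  have hpow : x ^ (-(i : ℝ) - 1 - p) ≤ y ^ (-(i : ℝ) - 1 - p) :=
    Real.rpow_le_rpow hx.le hxy (by linarith)
  gcongr

/-- The graph of `(-1)^i ψ⁽ⁱ⁾`, as a function of `u^p`, lies above its tangent line at `c^p`. -/
lemma tangent_ineq {i : ℕ} {p : ℝ} (hp : p ≤ -(i : ℝ) - 1) {c : ℝ} (hc : 0 < c) :
    ∃ K : ℝ, ∀ u : ℝ, 0 < u →
      (-1) ^ i * polygamma i c + K * (u ^ p - c ^ p) ≤ (-1) ^ i * polygamma i u := by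
  have hi : (0 : ℝ) ≤ i := i.cast_nonneg
  have hp0 : p ≠ 0 := by linarith
  set G : ℝ → ℝ := fun u => (i + 1).factorial * (u ^ (1 - p) * hurwitzSum (i + 2) u) with hG
  have hGmono : ∀ x y : ℝ, 0 < x → x ≤ y → G x ≤ G y := fun x y hx hxy =>
    mul_le_mul_of_nonneg_left (rpow_mul_hurwitzSum_mono hp hx hxy) (by positivity)
  set h : ℝ → ℝ := fun u => (-1) ^ i * polygamma i u - G c / p * u ^ p with hh
  have hder : ∀ u : ℝ, 0 < u → HasDerivAt h (u ^ (p - 1) * (G u - G c)) u := by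
    intro u hu
    have h1 := ((hasDerivAt_polygamma i hu).const_mul ((-1 : ℝ) ^ i)).sub
      ((Real.hasDerivAt_rpow_const (p := p) (Or.inl hu.ne')).const_mul (G c / p))
    refine h1.congr_deriv ?_
    have hsgn : (-1 : ℝ) ^ i * (-1) ^ i = 1 := by rw [← mul_pow]; simp
    have hpw : u ^ (p - 1) * u ^ (1 - p) = 1 := by rw [← Real.rpow_add hu]; simp
    have e1 : G c / p * (p * u ^ (p - 1)) = G c * u ^ (p - 1) := by field_simp
    rw [e1, ← mul_assoc, hsgn, mul_sub]
    simp only [hG]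
    linear_combination (-((i + 1).factorial : ℝ) * hurwitzSum (i + 2) u) * hpw
  have hcont : ∀ u : ℝ, 0 < u → ContinuousAt h u := fun u hu => (hder u hu).continuousAt
  have hmin : ∀ u : ℝ, 0 < u → h c ≤ h u := by
    intro u hu
    rcases le_total c u with hcu | huc
    · refine monotoneOn_of_deriv_nonneg (convex_Ici c)
        (fun y hy => (hcont y (hc.trans_le hy)).continuousWithinAt) ?_ ?_
        (self_mem_Ici) hcu hcu
      · rw [interior_Ici]
        exact fun y hy => (hder y (hc.trans hy)).differentiableAt.differentiableWithinAt
      · rw [interior_Ici]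
        intro y hy
        have hy0 : 0 < y := hc.trans hy
        rw [(hder y hy0).deriv]
        exact mul_nonneg (by positivity) (sub_nonneg.2 (hGmono c y hc (le_of_lt hy)))
    · refine antitoneOn_of_deriv_nonpos (convex_Icc u c)
        (fun y hy => (hcont y (hu.trans_le hy.1)).continuousWithinAt) ?_ ?_
        (left_mem_Icc.2 huc) (right_mem_Icc.2 huc) huc
      · rw [interior_Icc]
        exact fun y hy => (hder y (hu.trans hy.1)).differentiableAt.differentiableWithinAt
      · rw [interior_Icc]
        intro y hy
        have hy0 : 0 < y := hu.trans hy.1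
        rw [(hder y hy0).deriv]
        exact mul_nonpos_of_nonneg_of_nonpos (by positivity)
          (sub_nonpos.2 (hGmono y c hy0 (le_of_lt hy.2)))
  refine ⟨G c / p, fun u hu => ?_⟩
  have := hmin u hu
  simp only [hh] at this
  linarith

/-! ### The generalized logarithmic mean -/

lemma genLogMean_comm {p : ℝ} (hp : p ≠ 0) (s t : ℝ) : genLogMean p s t = genLogMean p t s := by
  unfold genLogMean
  split_ifs with h1
  · rw [← neg_sub t s, ← neg_sub (Real.log t), neg_div_neg_eq]
  · rw [← neg_sub t s, ← neg_sub (t ^ (p + 1)), mul_neg, neg_div_neg_eq]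

lemma genLogMean_spec {p s t : ℝ} (hp : p ≤ -1) (hs : 0 < s) (hst : s < t) :
    0 < genLogMean p s t ∧ ∫ u in s..t, u ^ p = (t - s) * genLogMean p s t ^ p := by
  have hp0 : p ≠ 0 := by linarith
  have hts : 0 < t - s := sub_pos.2 hst
  have h0 : (0 : ℝ) ∉ uIcc s t := by
    rw [uIcc_of_le hst.le]
    exact fun h => absurd h.1 (not_le.2 hs)
  have hcont : ContinuousOn (fun u : ℝ => u ^ p) (uIcc s t) := fun u hu =>
    (Real.continuousAt_rpow_const u p (Or.inl fun h => h0 (h ▸ hu))).continuousWithinAt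
  have hpos : 0 < ∫ u in s..t, u ^ p :=
    intervalIntegral.intervalIntegral_pos_of_pos_on hcont.intervalIntegrable
      (fun u hu => Real.rpow_pos_of_pos (hs.trans hu.1) p) hst
  have hform : genLogMean p s t = ((∫ u in s..t, u ^ p) / (t - s)) ^ (1 / p) := by
    unfold genLogMean
    split_ifs with h1
    · subst h1
      have ht : 0 < t := hs.trans hst
      have : ∫ u in s..t, u ^ (-1 : ℝ) = Real.log t - Real.log s := by
        simp only [Real.rpow_neg_one]
        rw [integral_inv h0, Real.log_div ht.ne' hs.ne']
      rw [this]
      norm_num [Real.rpow_neg_one]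
    · rw [integral_rpow (Or.inr ⟨h1, h0⟩), div_div]
  have hA : 0 < (∫ u in s..t, u ^ p) / (t - s) := by positivity
  rw [hform]
  refine ⟨Real.rpow_pos_of_pos hA _, ?_⟩
  rw [← Real.rpow_mul hA.le, one_div_mul_cancel hp0, Real.rpow_one]
  field_simp

lemma polygamma_genLogMean_le {s t : ℝ} (hs : 0 < s) (hst : s < t) (i : ℕ) {p : ℝ}
    (hp : p ≤ -(i : ℝ) - 1) :
    (-1 : ℝ) ^ i * polygamma i (genLogMean p s t) ≤
      (-1 : ℝ) ^ i / (t - s) * ∫ u in s..t, polygamma i u := by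
  have hi : (0 : ℝ) ≤ i := i.cast_nonneg
  have hts : 0 < t - s := sub_pos.2 hst
  obtain ⟨hc, hint⟩ := genLogMean_spec (by linarith : p ≤ -1) hs hst
  set c := genLogMean p s t
  obtain ⟨K, hK⟩ := tangent_ineq hp hc
  have hpos : ∀ u ∈ uIcc s t, 0 < u := by
    rw [uIcc_of_le hst.le]
    exact fun u hu => hs.trans_le hu.1
  have hi1 : IntervalIntegrable (fun u : ℝ => u ^ p) MeasureTheory.volume s t :=
    ContinuousOn.intervalIntegrable fun u hu =>
      (Real.continuousAt_rpow_const u p (Or.inl (hpos u hu).ne')).continuousWithinAt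
  have hi2 : IntervalIntegrable (polygamma i) MeasureTheory.volume s t :=
    ContinuousOn.intervalIntegrable fun u hu =>
      (hasDerivAt_polygamma i (hpos u hu)).continuousAt.continuousWithinAt
  have hi3 : IntervalIntegrable (fun u : ℝ => K * (u ^ p - c ^ p)) MeasureTheory.volume s t :=
    (hi1.sub intervalIntegrable_const).const_mul K
  have hmono := intervalIntegral.integral_mono_on hst.le (intervalIntegrable_const.add hi3)
    (hi2.const_mul ((-1 : ℝ) ^ i)) (fun u hu => hK u (hs.trans_le hu.1))
  rw [intervalIntegral.integral_add intervalIntegrable_const hi3,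
    intervalIntegral.integral_const, intervalIntegral.integral_const_mul, intervalIntegral.integral_sub hi1 intervalIntegrable_const,
    hint, intervalIntegral.integral_const_mul] at hmono
  simp only [intervalIntegral.integral_const, smul_eq_mul, sub_self, mul_zero, add_zero] at hmono
  rw [div_mul_eq_mul_div, le_div_iff₀ hts]
  linarith

theorem stmt_6 (s t : ℝ) (hs : 0 < s) (ht : 0 < t) (hst : s ≠ t)
    (i : ℕ) (p : ℝ) (hp : p ≤ -(i : ℝ) - 1) :
    (-1 : ℝ) ^ i * polygamma i (genLogMean p s t) ≤
      (-1 : ℝ) ^ i / (t - s) * ∫ u in s..t, polygamma i u := by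
  rcases lt_or_gt_of_ne hst with h | h
  · exact polygamma_genLogMean_le hs h i hp
  · have hi : (0 : ℝ) ≤ i := i.cast_nonneg
    have key := polygamma_genLogMean_le ht h i hp
    rw [genLogMean_comm (by linarith : p ≠ 0), intervalIntegral.integral_symm, ← neg_sub t s,
      div_neg, neg_mul_neg] at key
    exact key
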